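/- arXiv:2603.05460 — 4 statements merged into one kernel-verified Lean document; each statement's English description precedes it below -/
import Mathlib

section
/- Let r_1 be a real number with r_1 > −1 and r_1 ≠ 0, define f(φ_1) = (3 + r_1 + 2r_1φ_1)/(3 + r_1 − r_1φ_1), and let ε̂ ∈ ℝ. Then the function η(φ_1) = |f(φ_1) − ε̂| is strictly quasiconvex on [0,1]: for all x, y ∈ [0,1] with x ≠ y and all t ∈ (0,1), η(tx + (1−t)y) < max(η(x), η(y)). Consequently η attains its minimum over [0,1] at a unique point. -/
/-!
The denominator `3 + r₁ - r₁ φ = 3 + r₁ (1 - φ)` is positive on `[0,1]`, and the Möbius function `f`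
satisfies `f b - f a = 3 r₁ (3 + r₁) (b - a) / (D a * D b)`, where `D` is the denominator. So `f` is
continuous and strictly monotone on `[0,1]`, and at a point strictly between `x` and `y` its value
is strictly between `f x` and `f y`; composing with the convex function `|· - εhat|` gives strict
quasiconvexity. A minimizer exists by compactness, and two distinct minimizers would contradict
strict quasiconvexity at their midpoint.
-/

/-- The hypothesis says that `c` lies strictly between `a` and `b`, in either order. -/
lemma abs_sub_lt_max_of_strictly_between {a b c : ℝ} (e : ℝ) (h : 0 < (c - a) * (b - c)) :
    |c - e| < max |a - e| |b - e| := by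
  rcases pos_and_pos_or_neg_and_neg_of_mul_pos h with ⟨h1, h2⟩ | ⟨h1, h2⟩ <;>
  · rw [lt_max_iff]
    by_contra! hcon
    obtain ⟨ha, hb⟩ := hcon
    rcases abs_cases (c - e) with hc | hc <;>
      linarith [neg_abs_le (a - e), le_abs_self (a - e), neg_abs_le (b - e), le_abs_self (b - e)]

/-- For `r₁ ∈ (-1,0) ∪ (0,∞)` and any `εhat ∈ ℝ`, the objective
`η(φ₁) = |f(φ₁) − εhat|` with `f(φ₁) = (3 + r₁ + 2r₁φ₁)/(3 + r₁ − r₁φ₁)` is strictly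
quasiconvex on `[0,1]`, and consequently attains its minimum over `[0,1]` at a unique point. -/
theorem mori_tanaka_two_component_strict_quasiconvex
    (r1 : ℝ) (hr1 : -1 < r1) (hr1' : r1 ≠ 0) (f : ℝ → ℝ)
    (hf : ∀ x, f x = (3 + r1 + 2 * r1 * x) / (3 + r1 - r1 * x)) (εhat : ℝ) :
    (∀ x ∈ Set.Icc (0 : ℝ) 1, ∀ y ∈ Set.Icc (0 : ℝ) 1, x ≠ y →
      ∀ t ∈ Set.Ioo (0 : ℝ) 1,
        |f (t * x + (1 - t) * y) - εhat| < max (|f x - εhat|) (|f y - εhat|)) ∧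
    (∃! z, z ∈ Set.Icc (0 : ℝ) 1 ∧
      ∀ w ∈ Set.Icc (0 : ℝ) 1, |f z - εhat| ≤ |f w - εhat|) := by
  have hD : ∀ x ∈ Set.Icc (0 : ℝ) 1, 0 < 3 + r1 - r1 * x := by
    rintro x ⟨h0, h1⟩
    nlinarith [mul_nonneg (sub_nonneg.2 h1) (by linarith : (0 : ℝ) ≤ r1 + 1)]
  have hdiff : ∀ a ∈ Set.Icc (0 : ℝ) 1, ∀ b ∈ Set.Icc (0 : ℝ) 1, f b - f a =
      3 * r1 * (3 + r1) * (b - a) / ((3 + r1 - r1 * a) * (3 + r1 - r1 * b)) := by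
    intro a ha b hb
    have h1 := (hD a ha).ne'
    have h2 := (hD b hb).ne'
    rw [hf, hf, div_sub_div _ _ h2 h1, div_eq_div_iff (mul_ne_zero h2 h1) (mul_ne_zero h1 h2)]
    ring
  have hq : ∀ x ∈ Set.Icc (0 : ℝ) 1, ∀ y ∈ Set.Icc (0 : ℝ) 1, x ≠ y →
      ∀ t ∈ Set.Ioo (0 : ℝ) 1,
        |f (t * x + (1 - t) * y) - εhat| < max (|f x - εhat|) (|f y - εhat|) := by
    intro x hx y hy hxy t ht
    have ht' : 0 < 1 - t := sub_pos.2 ht.2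
    have hz : t * x + (1 - t) * y ∈ Set.Icc (0 : ℝ) 1 :=
      convex_Icc (0 : ℝ) 1 hx hy ht.1.le ht'.le (by ring)
    apply abs_sub_lt_max_of_strictly_between
    rw [hdiff x hx _ hz, hdiff _ hz y hy, div_mul_div_comm]
    have hDx := hD x hx
    have hDy := hD y hy
    have hDz := hD _ hz
    refine div_pos ?_ (by positivity)
    have hA : 3 + r1 ≠ 0 := by linarith
    have hyx : y - x ≠ 0 := sub_ne_zero.2 hxy.symm
    have ht0 := ht.1
    have hpos : 0 < (3 * r1 * (3 + r1) * (y - x)) ^ 2 * (t * (1 - t)) := by positivity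
    exact hpos.trans_eq (by ring)
  refine ⟨hq, ?_⟩
  have hcont : ContinuousOn (fun x => |f x - εhat|) (Set.Icc (0 : ℝ) 1) := by
    have : f = fun x => (3 + r1 + 2 * r1 * x) / (3 + r1 - r1 * x) := funext hf
    rw [this]
    exact ((ContinuousOn.div (by fun_prop) (by fun_prop) fun x hx => (hD x hx).ne').sub
      continuousOn_const).abs
  obtain ⟨z, hz, hmin⟩ := isCompact_Icc.exists_isMinOn (Set.nonempty_Icc.2 zero_le_one) hcont
  refine ⟨z, ⟨hz, fun w hw => hmin hw⟩, ?_⟩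
  rintro y ⟨hy, hymin⟩
  by_contra hne
  have hlt := hq y hy z hz hne (1 / 2) (by norm_num)
  have hm : (1 / 2 : ℝ) * y + (1 - 1 / 2) * z ∈ Set.Icc (0 : ℝ) 1 := by
    constructor <;> linarith [hy.1, hy.2, hz.1, hz.2]
  exact hlt.not_ge (max_le (hymin _ hm) (hmin hm))
end

section
/- Let u ∈ ℝ^n. Then the intersection of the standard simplex Δ with the hyperplane {φ : u·φ = 0} equals the convex hull of the set {e_i : u_i = 0} ∪ {φ^{ij⋆} : u_i > 0 and u_j < 0}, where e_i are the standard basis vectors and φ^{ij⋆} = (u_j/(u_j−u_i)) e_i − (u_i/(u_j−u_i)) e_j. -/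
/-!
The inclusion `⊇` holds because the left side is convex and contains every generator.

For `⊆`, let `φ` lie in the simplex with `u·φ = 0`. The positive and negative parts of `u·φ` have
the same mass `S = ∑ᵢ uᵢ⁺ φᵢ = ∑ⱼ uⱼ⁻ φⱼ`, and `φ` is recovered by the product coupling
`φ = ∑_{uᵢ = 0} φᵢ eᵢ + ∑_{uᵢ > 0 > uⱼ} (φᵢ φⱼ (uᵢ - uⱼ) / S) φ^{ij⋆}`,
since `(uᵢ - uⱼ) φ^{ij⋆} = -uⱼ eᵢ + uᵢ eⱼ`. If `S = 0`, then `φ` is supported on `{u = 0}`, and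
the second sum vanishes under the convention `x / 0 = 0`, so the formula is still valid. The weights
sum to one because `φ` and all the generators have coordinate sum one.
-/

/-- The point where the edge `[eᵢ, eⱼ]` meets the hyperplane `u·φ = 0`, meaningful when
`u j < 0 < u i`. -/
noncomputable def crossingPoint {n : ℕ} (u : Fin n → ℝ) (i j : Fin n) : Fin n → ℝ :=
  (u j / (u j - u i)) • (Pi.single i 1 : Fin n → ℝ) -
    (u i / (u j - u i)) • (Pi.single j 1 : Fin n → ℝ)

/-- The weight of `crossingPoint u i j` in the decomposition of `φ`, with normalisation `S`. -/
noncomputable def crossingWeight {n : ℕ} (u φ : Fin n → ℝ) (S : ℝ) (i j : Fin n) : ℝ :=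
  if 0 < u i ∧ u j < 0 then φ i * φ j * (u i - u j) / S else 0

lemma sum_crossingPoint {n : ℕ} (u : Fin n → ℝ) (i j : Fin n) (hi : 0 < u i) (hj : u j < 0) :
    ∑ k, crossingPoint u i j k = 1 := by
  have h : u j - u i ≠ 0 := by linarith
  simp only [crossingPoint, Pi.sub_apply, Pi.smul_apply, smul_eq_mul, Finset.sum_sub_distrib,
    ← Finset.mul_sum, Finset.sum_pi_single', Finset.mem_univ, if_true]
  field_simp

/-- Splits the contribution of the pair `(i, j)` at coordinate `k` into two products of a function
of `i` and a function of `j`, so that the double sum factors. -/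
lemma crossingWeight_mul_crossingPoint {n : ℕ} (u φ : Fin n → ℝ) (S : ℝ) (i j k : Fin n) :
    crossingWeight u φ S i j * crossingPoint u i j k =
      (if k = i then (if 0 < u i then φ i / S else 0) else 0) * (max (-u j) 0 * φ j) +
      (max (u i) 0 * φ i) * (if k = j then (if u j < 0 then φ j / S else 0) else 0) := by
  unfold crossingWeight crossingPoint
  simp only [Pi.sub_apply, Pi.smul_apply, smul_eq_mul, Pi.single_apply]
  by_cases hi : 0 < u i
  · by_cases hj : u j < 0
    · have h : u j - u i ≠ 0 := by linarith
      rw [max_eq_left (by linarith : 0 ≤ -u j), max_eq_left hi.le]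
      simp only [hi, hj, and_self, if_true]
      have h1 : φ i * φ j * (u i - u j) / S * (u j / (u j - u i)) = φ i / S * (-u j * φ j) := by
        rw [div_mul_div_comm, mul_comm S, ← div_div]
        field_simp
        ring
      have h2 : φ i * φ j * (u i - u j) / S * (u i / (u j - u i)) = -(u i * φ i * (φ j / S)) := by
        rw [div_mul_div_comm, mul_comm S, ← div_div]
        field_simp
        ring
      rw [mul_sub, ← mul_assoc, ← mul_assoc, h1, h2]
      split_ifs <;> ring
    · rw [max_eq_right (by linarith : -u j ≤ 0)]
      simp [hj]
  · rw [max_eq_right (not_lt.mp hi)]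
    simp [hi]

/-- The product-coupling decomposition of `φ`. -/
lemma decomposition {n : ℕ} (u φ : Fin n → ℝ) (h0 : ∀ i, 0 ≤ φ i) (S : ℝ)
    (ha : ∑ i, max (u i) 0 * φ i = S) (hb : ∑ i, max (-u i) 0 * φ i = S) (k : Fin n) :
    (∑ i, (if u i = 0 then φ i else 0) * (Pi.single i 1 : Fin n → ℝ) k) +
      ∑ i, ∑ j, crossingWeight u φ S i j * crossingPoint u i j k = φ k := by
  have hpair : ∑ i, ∑ j, crossingWeight u φ S i j * crossingPoint u i j k =
      (if 0 < u k then φ k / S else 0) * S + S * (if u k < 0 then φ k / S else 0) := by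
    simp only [crossingWeight_mul_crossingPoint, Finset.sum_add_distrib]
    rw [← Finset.sum_mul_sum, ← Finset.sum_mul_sum, ha, hb]
    simp
  have hzero : ∑ i, (if u i = 0 then φ i else 0) * (Pi.single i 1 : Fin n → ℝ) k =
      if u k = 0 then φ k else 0 := by
    simp [Pi.single_apply]
  rw [hpair, hzero]
  -- Each term of the two mass sums is at most `S`, so `S = 0` kills `φ` off `{u = 0}`.
  have hak : max (u k) 0 * φ k ≤ S := ha ▸ Finset.single_le_sum
    (f := fun i => max (u i) 0 * φ i)
    (fun i _ => mul_nonneg (le_max_right _ _) (h0 i)) (Finset.mem_univ k)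
  have hbk : max (-u k) 0 * φ k ≤ S := hb ▸ Finset.single_le_sum
    (f := fun i => max (-u i) 0 * φ i)
    (fun i _ => mul_nonneg (le_max_right _ _) (h0 i)) (Finset.mem_univ k)
  have hS : u k ≠ 0 → S = 0 → φ k = 0 := by
    rintro hk rfl
    rcases lt_or_gt_of_ne hk with h | h
    · rw [max_eq_left (by linarith : 0 ≤ -u k)] at hbk
      nlinarith [h0 k]
    · rw [max_eq_left h.le] at hak
      nlinarith [h0 k]
  rcases lt_trichotomy (u k) 0 with h | h | h
  · simp only [h, h.ne, not_lt.mpr h.le, if_true, if_false, zero_mul, zero_add]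
    exact mul_div_cancel_of_imp' (hS h.ne)
  · simp [h]
  · simp only [h, h.ne', not_lt.mpr h.le, if_true, if_false, mul_zero, zero_add, add_zero]
    exact div_mul_cancel_of_imp (hS h.ne')

/-- The intersection of the standard simplex with the hyperplane
`{φ : u·φ = 0}` equals the convex hull of the vertices `eᵢ` with `u i = 0` together with the
edge crossing points `φ^{ij⋆} = (u j/(u j − u i)) eᵢ − (u i/(u j − u i)) eⱼ` for
`u i > 0`, `u j < 0`. -/
theorem simplex_hyperplane_intersection_eq_convexHull
    (n : ℕ) (u : Fin n → ℝ) :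
    {φ : Fin n → ℝ | (∀ i, 0 ≤ φ i) ∧ (∑ i, φ i = 1) ∧ (∑ i, u i * φ i = 0)} =
    convexHull ℝ
      ({x : Fin n → ℝ | ∃ i, u i = 0 ∧ x = (Pi.single i 1 : Fin n → ℝ)} ∪
       {x : Fin n → ℝ | ∃ i j, 0 < u i ∧ u j < 0 ∧
         x = (u j / (u j - u i)) • (Pi.single i 1 : Fin n → ℝ) -
             (u i / (u j - u i)) • (Pi.single j 1 : Fin n → ℝ)}) := by
  apply Set.Subset.antisymm
  · rintro φ ⟨h0, h1, hu⟩
    obtain ⟨S, ha⟩ : ∃ S, ∑ i, max (u i) 0 * φ i = S := ⟨_, rfl⟩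
    have hb : ∑ i, max (-u i) 0 * φ i = S := by
      rw [← ha, ← sub_eq_zero, ← neg_eq_zero]
      refine Eq.trans ?_ hu
      rw [← Finset.sum_sub_distrib, ← Finset.sum_neg_distrib]
      refine Finset.sum_congr rfl fun i _ => ?_
      rcases le_total (u i) 0 with h | h
      · rw [max_eq_left (by linarith : 0 ≤ -u i), max_eq_right h]; ring
      · rw [max_eq_right (by linarith : -u i ≤ 0), max_eq_left h]; ring
    have hS : 0 ≤ S := ha ▸ Finset.sum_nonneg fun i _ =>
      mul_nonneg (le_max_right _ _) (h0 i)
    let w : Fin n ⊕ Fin n × Fin n → ℝ :=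
      Sum.elim (fun i => if u i = 0 then φ i else 0) (fun p => crossingWeight u φ S p.1 p.2)
    let z : Fin n ⊕ Fin n × Fin n → Fin n → ℝ :=
      Sum.elim (fun i => Pi.single i 1) (fun p => crossingPoint u p.1 p.2)
    have hwz : ∀ k, ∑ a, w a * z a k = φ k := by
      intro k
      rw [Fintype.sum_sum_type, Fintype.sum_prod_type]
      exact decomposition u φ h0 S ha hb k
    have hw0 : ∀ a, 0 ≤ w a := by
      rintro (i | ⟨i, j⟩)
      · simp only [w, Sum.elim_inl]
        split_ifs
        exacts [h0 i, le_rfl]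
      · simp only [w, Sum.elim_inr, crossingWeight]
        split_ifs with h
        · exact div_nonneg (mul_nonneg (mul_nonneg (h0 i) (h0 j)) (by linarith)) hS
        · exact le_rfl
    have hz1 : ∀ a, w a * ∑ k, z a k = w a := by
      rintro (i | ⟨i, j⟩)
      · simp [z]
      · simp only [w, z, Sum.elim_inr]
        by_cases h : 0 < u i ∧ u j < 0
        · rw [sum_crossingPoint u i j h.1 h.2, mul_one]
        · simp [crossingWeight, h]
    have hw1 : ∑ a, w a = 1 := by
      rw [← h1, ← Finset.sum_congr rfl fun k _ => hwz k, Finset.sum_comm]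
      refine Finset.sum_congr rfl fun a _ => ?_
      rw [← Finset.mul_sum, hz1]
    have hφ : φ = ∑ᶠ a, w a • z a := by
      rw [finsum_eq_sum_of_fintype]
      ext k
      simp [Finset.sum_apply, hwz]
    rw [hφ]
    refine (convex_convexHull ℝ _).finsum_mem hw0 (by rwa [finsum_eq_sum_of_fintype]) ?_
    rintro (i | ⟨i, j⟩) ha
    · refine subset_convexHull ℝ _ (Or.inl ⟨i, ?_, rfl⟩)
      by_contra h
      exact ha (if_neg h)
    · have h : 0 < u i ∧ u j < 0 := by
        by_contra h
        exact ha (if_neg h)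
      exact subset_convexHull ℝ _ (Or.inr ⟨i, j, h.1, h.2, rfl⟩)
  · apply convexHull_min
    · rintro x (⟨i, hi, rfl⟩ | ⟨i, j, hi, hj, rfl⟩)
      · refine ⟨fun k => ?_, by simp, by simp [Pi.single_apply, hi]⟩
        rw [Pi.single_apply]
        split_ifs <;> norm_num
      · refine ⟨fun k => ?_, sum_crossingPoint u i j hi hj, ?_⟩
        · have h1 : 0 ≤ u j / (u j - u i) := div_nonneg_of_nonpos hj.le (by linarith)
          have h2 : u i / (u j - u i) ≤ 0 := div_nonpos_of_nonneg_of_nonpos hi.le (by linarith)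
          simp only [Pi.sub_apply, Pi.smul_apply, smul_eq_mul, Pi.single_apply]
          split_ifs <;> linarith
        · simp only [Pi.sub_apply, Pi.smul_apply, smul_eq_mul, Pi.single_apply, mul_sub,
            Finset.sum_sub_distrib, mul_ite, mul_one, mul_zero, Finset.sum_ite_eq',
            Finset.mem_univ, if_true]
          ring
    · rintro x ⟨hx0, hx1, hxu⟩ y ⟨hy0, hy1, hyu⟩ a b ha hb hab
      refine ⟨fun k => ?_, ?_, ?_⟩
      · exact add_nonneg (mul_nonneg ha (hx0 k)) (mul_nonneg hb (hy0 k))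
      · simp only [Pi.add_apply, Pi.smul_apply, smul_eq_mul, Finset.sum_add_distrib,
          ← Finset.mul_sum, hx1, hy1, mul_one, hab]
      · simp only [Pi.add_apply, Pi.smul_apply, smul_eq_mul, mul_add, Finset.sum_add_distrib,
          mul_left_comm (u _), ← Finset.mul_sum, hxu, hyu, mul_zero, add_zero]
end

section
/- Let n ≥ 3 and let u ∈ ℝ^n have an index i with u_i > 0 and two distinct indices j ≠ k with u_j < 0 and u_k < 0. Then the set {φ ∈ Δ : u·φ = 0} (where Δ is the standard simplex) contains at least two distinct points; consequently, for p, q ∈ ℝ^n with u = p − ε̂q and q·φ > 0 on Δ, the function η(φ) = |(p·φ)/(q·φ) − ε̂| has more than one minimizer on Δ and is therefore not strictly quasiconvex on Δ. -/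
/-!
An edge of the simplex joining a vertex where `u` is positive to a vertex where `u` is negative
crosses the hyperplane `u·φ = 0` in its relative interior (`exists_edge_zero`). The edges from
vertex `i` to the vertices `j` and `k` meet only at `i`, so their crossing points are distinct:
the first has a positive `j`-th coordinate, the second has none. At every zero of `u·φ` the
objective vanishes (`objective_eq_zero`), hence both crossing points are minimizers. Strict
quasiconvexity at their midpoint would make an absolute value smaller than `max 0 0`.
-/

/-- If `u i > 0 > u a`, the edge from vertex `i` to vertex `a` of the standard simplex contains
a zero of `φ ↦ u·φ`, and the weight of this zero at `a` is positive. -/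
lemma exists_edge_zero {n : ℕ} (u : Fin n → ℝ) (i a : Fin n) (hi : 0 < u i) (ha : u a < 0) :
    ∃ φ : Fin n → ℝ, ((∀ l, 0 ≤ φ l) ∧ (∑ l, φ l = 1) ∧ (∑ l, u l * φ l = 0)) ∧
      0 < φ a ∧ ∀ l, l ≠ i → l ≠ a → φ l = 0 := by
  have hia : a ≠ i := by rintro rfl; linarith
  have hd : 0 < u i - u a := by linarith
  have hs : 0 ≤ -u a / (u i - u a) := div_nonneg (by linarith) hd.le
  have ht : 0 < u i / (u i - u a) := div_pos hi hd
  refine ⟨Pi.single i (-u a / (u i - u a)) + Pi.single a (u i / (u i - u a)),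
    ⟨fun l => ?_, ?_, ?_⟩, ?_, fun l hli hla => ?_⟩
  · simp only [Pi.add_apply, Pi.single_apply]
    split_ifs <;> linarith
  · simp only [Pi.add_apply, Finset.sum_add_distrib, Finset.sum_pi_single', Finset.mem_univ,
      if_true]
    field_simp
    ring
  · simp only [Pi.add_apply, mul_add, Finset.sum_add_distrib, Pi.single_apply, mul_ite, mul_zero,
      Finset.sum_ite_eq', Finset.mem_univ, if_true]
    field_simp
    ring
  · simpa [Pi.single_apply, hia] using ht
  · simp [hli, hla]

lemma objective_eq_zero {n : ℕ} {p q u : Fin n → ℝ} {c : ℝ} (hu : ∀ l, u l = p l - c * q l)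
    {φ : Fin n → ℝ} (hq : 0 < ∑ l, q l * φ l) (h : ∑ l, u l * φ l = 0) :
    |(∑ l, p l * φ l) / (∑ l, q l * φ l) - c| = 0 := by
  have hp : ∑ l, p l * φ l = c * ∑ l, q l * φ l := by
    simp only [hu, sub_mul, Finset.sum_sub_distrib, mul_assoc, ← Finset.mul_sum] at h
    linarith
  rw [hp, mul_div_cancel_right₀ _ hq.ne', sub_self, abs_zero]

/-- For `n ≥ 3`, if `u = p − εhat·q` has an index with `u i > 0` and two
distinct indices `j ≠ k` with `u j < 0` and `u k < 0`, and `q·φ > 0` on the standard simplex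
`Δ`, then `{φ ∈ Δ : u·φ = 0}` contains two distinct points, the objective
`η(φ) = |(p·φ)/(q·φ) − εhat|` has more than one minimizer over `Δ`, and `η` is not strictly
quasiconvex on `Δ`. -/
theorem inverse_MT_not_strictly_quasiconvex
    (n : ℕ) (hn : 3 ≤ n) (p q u : Fin n → ℝ) (εhat : ℝ)
    (i j k : Fin n) (hjk : j ≠ k) (hi : 0 < u i) (hj : u j < 0) (hk : u k < 0)
    (hu : ∀ l, u l = p l - εhat * q l)
    (hq : ∀ φ : Fin n → ℝ, (∀ l, 0 ≤ φ l) → ∑ l, φ l = 1 → 0 < ∑ l, q l * φ l) :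
    (∃ φ ψ : Fin n → ℝ, φ ≠ ψ ∧
      ((∀ l, 0 ≤ φ l) ∧ (∑ l, φ l = 1) ∧ (∑ l, u l * φ l = 0)) ∧
      ((∀ l, 0 ≤ ψ l) ∧ (∑ l, ψ l = 1) ∧ (∑ l, u l * ψ l = 0))) ∧
    (∃ φ ψ : Fin n → ℝ, φ ≠ ψ ∧
      ((∀ l, 0 ≤ φ l) ∧ (∑ l, φ l = 1)) ∧ ((∀ l, 0 ≤ ψ l) ∧ (∑ l, ψ l = 1)) ∧
      (∀ χ : Fin n → ℝ, (∀ l, 0 ≤ χ l) → ∑ l, χ l = 1 →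
        |(∑ l, p l * φ l) / (∑ l, q l * φ l) - εhat| ≤
          |(∑ l, p l * χ l) / (∑ l, q l * χ l) - εhat|) ∧
      (∀ χ : Fin n → ℝ, (∀ l, 0 ≤ χ l) → ∑ l, χ l = 1 →
        |(∑ l, p l * ψ l) / (∑ l, q l * ψ l) - εhat| ≤
          |(∑ l, p l * χ l) / (∑ l, q l * χ l) - εhat|)) ∧
    ¬ (∀ x y : Fin n → ℝ, ((∀ l, 0 ≤ x l) ∧ ∑ l, x l = 1) →
        ((∀ l, 0 ≤ y l) ∧ ∑ l, y l = 1) → x ≠ y → ∀ t ∈ Set.Ioo (0 : ℝ) 1,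
        |(∑ l, p l * (t • x + (1 - t) • y) l) / (∑ l, q l * (t • x + (1 - t) • y) l) - εhat| <
          max (|(∑ l, p l * x l) / (∑ l, q l * x l) - εhat|)
              (|(∑ l, p l * y l) / (∑ l, q l * y l) - εhat|)) := by
  obtain ⟨φ, ⟨hφ0, hφ1, hφu⟩, hφj, -⟩ := exists_edge_zero u i j hi hj
  obtain ⟨ψ, ⟨hψ0, hψ1, hψu⟩, -, hψ⟩ := exists_edge_zero u i k hi hk
  have hji : j ≠ i := by rintro rfl; linarith
  have hne : φ ≠ ψ := by
    rintro rfl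
    exact hφj.ne' (hψ j hji hjk)
  have hηφ := objective_eq_zero hu (hq φ hφ0 hφ1) hφu
  have hηψ := objective_eq_zero hu (hq ψ hψ0 hψ1) hψu
  refine ⟨⟨φ, ψ, hne, ⟨hφ0, hφ1, hφu⟩, ⟨hψ0, hψ1, hψu⟩⟩,
    ⟨φ, ψ, hne, ⟨hφ0, hφ1⟩, ⟨hψ0, hψ1⟩, fun χ _ _ => ?_, fun χ _ _ => ?_⟩, fun H => ?_⟩
  · rw [hηφ]; exact abs_nonneg _
  · rw [hηψ]; exact abs_nonneg _
  · have h := H φ ψ ⟨hφ0, hφ1⟩ ⟨hψ0, hψ1⟩ hne (1 / 2) ⟨by norm_num, by norm_num⟩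
    rw [hηφ, hηψ, max_self] at h
    exact (abs_nonneg _).not_gt h
end

section
/- Let u ∈ ℝ^n and let C₀ = {φ ∈ ℝ^n : φ_i ≥ 0, Σ_i φ_i = 1, φ_0 ≥ φ_i for all i ≥ 1} be the dominant-component ordered simplex with vertices φ^S for S ⊆ {1,…,n−1}. Then the intersection {φ ∈ C₀ : u·φ = 0} equals the convex hull of the set {φ^S : u·φ^S = 0} ∪ {φ^{S,k⋆} : S ⊆ {1,…,n−1}, k ∉ S, (u·φ^S)(u·φ^{S∪{k}}) < 0}, where φ^{S,k⋆} = t* φ^S + (1−t*) φ^{S∪{k}} with t* = (u·φ^{S∪{k}})/((u·φ^{S∪{k}}) − (u·φ^S)). -/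
/-!
The slice `A = {φ ∈ C₀ : u·φ = 0}` is compact and convex, so by Krein–Milman it is the closed
convex hull of its extreme points, and the closure is harmless because the proposed generating set
is finite. It remains to locate the extreme points (`mem_crossings_of_mem_extremePoints`).

Call a coordinate `i ≠ 0` of `φ` fractional if `0 < φ i < φ 0`. If two coordinates `j ≠ k` are
fractional, there is a nonzero `d` supported on `{j, k}` with `u·d = 0`; replacing `d` by
`d - (∑ d) φ` makes the coordinate sum vanish as well, and a short segment through `φ` in this
direction stays in `A`, so `φ` is not extreme (`fractional_subsingleton`). With no fractional
coordinate `φ` is a vertex; with a single one, `k`, it lies inside the edge joining `φ^S` and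
`φ^{S ∪ {k}}`, where `S` collects the coordinates equal to `φ 0`. On such an edge `u·φ = 0` forces
either both endpoints to lie on the hyperplane or `φ` to be the crossing point.
-/

open Filter Topology

/-! ### Vertices, slice and crossing points -/

/-- The vertex `φ^S` of the dominant-component ordered simplex. It is meant for `0 ∉ S`. -/
noncomputable def simplexVertex {n : ℕ} [NeZero n] (S : Finset (Fin n)) : Fin n → ℝ :=
  fun i => if i = 0 ∨ i ∈ S then (1 : ℝ) / (S.card + 1) else 0

/-- The dominant-component ordered simplex `C₀` cut by the hyperplane `u·φ = 0`. -/
def simplexSlice {n : ℕ} [NeZero n] (u : Fin n → ℝ) : Set (Fin n → ℝ) :=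
  {φ | ((∀ i, 0 ≤ φ i) ∧ (∑ i, φ i = 1) ∧ (∀ i : Fin n, i ≠ 0 → φ i ≤ φ 0)) ∧
    u ⬝ᵥ φ = 0}

/-- The point `φ^{S,k⋆}`. It lies on the hyperplane when `u·φ^S ≠ u·φ^{S ∪ {k}}`; otherwise the
weight is the junk value `0`. -/
noncomputable def edgeCrossing {n : ℕ} [NeZero n] (u : Fin n → ℝ) (S : Finset (Fin n))
    (k : Fin n) : Fin n → ℝ :=
  ((u ⬝ᵥ simplexVertex (insert k S)) /
      ((u ⬝ᵥ simplexVertex (insert k S)) - (u ⬝ᵥ simplexVertex S))) • simplexVertex S +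
    (1 - (u ⬝ᵥ simplexVertex (insert k S)) /
      ((u ⬝ᵥ simplexVertex (insert k S)) - (u ⬝ᵥ simplexVertex S))) • simplexVertex (insert k S)

/-- The vertices on the hyperplane together with the edge-crossing points. -/
def crossings {n : ℕ} [NeZero n] (u : Fin n → ℝ) : Set (Fin n → ℝ) :=
  {x | ∃ S : Finset (Fin n), (0 : Fin n) ∉ S ∧ u ⬝ᵥ simplexVertex S = 0 ∧ x = simplexVertex S} ∪
  {x | ∃ (S : Finset (Fin n)) (k : Fin n), (0 : Fin n) ∉ S ∧ k ∉ S ∧ k ≠ 0 ∧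
    (u ⬝ᵥ simplexVertex S) * (u ⬝ᵥ simplexVertex (insert k S)) < 0 ∧ x = edgeCrossing u S k}

section

variable {n : ℕ} [NeZero n]

lemma simplexVertex_nonneg (S : Finset (Fin n)) (i : Fin n) : 0 ≤ simplexVertex S i := by
  unfold simplexVertex
  split_ifs <;> positivity

lemma simplexVertex_le_zero (S : Finset (Fin n)) (i : Fin n) :
    simplexVertex S i ≤ simplexVertex S 0 := by
  unfold simplexVertex
  rw [if_pos (Or.inl rfl)]
  split_ifs
  · exact le_rfl
  · positivity

lemma sum_simplexVertex {S : Finset (Fin n)} (hS : (0 : Fin n) ∉ S) :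
    ∑ i, simplexVertex S i = 1 := by
  have hfilter : (Finset.univ.filter fun i : Fin n => i = 0 ∨ i ∈ S) = insert 0 S := by
    ext i; simp
  unfold simplexVertex
  rw [← Finset.sum_filter, hfilter, Finset.sum_const, Finset.card_insert_of_notMem hS]
  have : ((S.card : ℝ) + 1) ≠ 0 := by positivity
  simp only [nsmul_eq_mul]
  push_cast
  field_simp

/-! ### The slice is convex and compact, and contains the finite generating set -/

lemma convex_simplexSlice (u : Fin n → ℝ) : Convex ℝ (simplexSlice u) := by
  rintro x ⟨⟨hx0, hx1, hx2⟩, hxu⟩ y ⟨⟨hy0, hy1, hy2⟩, hyu⟩ a b ha hb hab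
  refine ⟨⟨fun i => ?_, ?_, fun i hi => ?_⟩, ?_⟩
  · have := mul_nonneg ha (hx0 i)
    have := mul_nonneg hb (hy0 i)
    simp only [Pi.add_apply, Pi.smul_apply, smul_eq_mul]
    linarith
  · simp only [Pi.add_apply, Pi.smul_apply, smul_eq_mul, Finset.sum_add_distrib,
      ← Finset.mul_sum, hx1, hy1]
    linarith
  · have := mul_le_mul_of_nonneg_left (hx2 i hi) ha
    have := mul_le_mul_of_nonneg_left (hy2 i hi) hb
    simp only [Pi.add_apply, Pi.smul_apply, smul_eq_mul]
    linarith
  · simp [dotProduct_add, dotProduct_smul, hxu, hyu]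

lemma isCompact_simplexSlice (u : Fin n → ℝ) : IsCompact (simplexSlice u) := by
  refine (isCompact_stdSimplex ℝ (Fin n)).of_isClosed_subset ?_ fun φ hφ => ⟨hφ.1.1, hφ.1.2.1⟩
  have h : simplexSlice u = {φ : Fin n → ℝ | ∀ i, 0 ≤ φ i} ∩ {φ | ∑ i, φ i = 1} ∩
      {φ | ∀ i : Fin n, i ≠ 0 → φ i ≤ φ 0} ∩ {φ | ∑ i, u i * φ i = 0} := by
    ext φ
    simp only [simplexSlice, dotProduct, Set.mem_ofPred_eq, Set.mem_inter_iff, and_assoc]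
  rw [h]
  refine ((IsClosed.inter ?_ ?_).inter ?_).inter ?_
  · simp only [Set.ofPred_forall]
    exact isClosed_iInter fun i => isClosed_le (by fun_prop) (by fun_prop)
  · exact isClosed_eq (by fun_prop) (by fun_prop)
  · simp only [Set.ofPred_forall]
    exact isClosed_iInter fun i => isClosed_iInter fun _ => isClosed_le (by fun_prop) (by fun_prop)
  · exact isClosed_eq (by fun_prop) (by fun_prop)

lemma simplexVertex_mem_slice {u : Fin n → ℝ} {S : Finset (Fin n)} (hS : (0 : Fin n) ∉ S)
    (hu : u ⬝ᵥ simplexVertex S = 0) : simplexVertex S ∈ simplexSlice u :=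
  ⟨⟨simplexVertex_nonneg S, sum_simplexVertex hS, fun i _ => simplexVertex_le_zero S i⟩, hu⟩

lemma crossings_subset_slice (u : Fin n → ℝ) : crossings u ⊆ simplexSlice u := by
  rintro x (⟨S, hS, hu, rfl⟩ | ⟨S, k, hS, hkS, hk, hneg, rfl⟩)
  · exact simplexVertex_mem_slice hS hu
  · have hS' : (0 : Fin n) ∉ insert k S := by simp [hS, hk.symm]
    unfold edgeCrossing
    set A := u ⬝ᵥ simplexVertex S with hA
    set B := u ⬝ᵥ simplexVertex (insert k S) with hB
    have hBA : B - A ≠ 0 := by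
      intro h
      have : A = B := by linarith
      rw [this] at hneg
      nlinarith [mul_self_nonneg B]
    have ht0 : 0 ≤ B / (B - A) := by
      rw [← mul_div_mul_right B (B - A) hBA]
      exact div_nonneg (by nlinarith [mul_self_nonneg B]) (mul_self_nonneg _)
    have ht1 : 0 ≤ 1 - B / (B - A) := by
      have : 1 - B / (B - A) = (-A * (B - A)) / ((B - A) * (B - A)) := by
        field_simp
        ring
      rw [this]
      exact div_nonneg (by nlinarith [mul_self_nonneg A]) (mul_self_nonneg _)
    -- The endpoints lie off the hyperplane, so convexity is applied to the slice by `u = 0`.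
    have hmem := convex_simplexSlice (0 : Fin n → ℝ)
      (simplexVertex_mem_slice hS (zero_dotProduct _))
      (simplexVertex_mem_slice hS' (zero_dotProduct _)) ht0 ht1 (by ring)
    refine ⟨hmem.1, ?_⟩
    rw [dotProduct_add, dotProduct_smul, dotProduct_smul, ← hA, ← hB]
    simp only [smul_eq_mul]
    field_simp
    ring

lemma finite_crossings (u : Fin n → ℝ) : (crossings u).Finite := by
  refine Set.Finite.union ?_ ?_
  · refine (Set.finite_range (simplexVertex (n := n))).subset ?_
    rintro x ⟨S, -, -, rfl⟩
    exact ⟨S, rfl⟩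
  · refine (Set.finite_range fun p : Finset (Fin n) × Fin n => edgeCrossing u p.1 p.2).subset ?_
    rintro x ⟨S, k, -, -, -, -, rfl⟩
    exact ⟨(S, k), rfl⟩

lemma zero_pos_of_mem_slice {u φ : Fin n → ℝ} (hφ : φ ∈ simplexSlice u) : 0 < φ 0 := by
  obtain ⟨⟨h0, h1, h2⟩, -⟩ := hφ
  by_contra hneg
  have hz : ∀ i, φ i = 0 := fun i => by
    by_cases hi : i = 0
    · subst hi; linarith [h0 0]
    · linarith [h0 i, h2 i hi]
  simp [hz] at h1

/-! ### Extreme points of the slice -/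

/-- Two fractional coordinates leave room to move in both directions within the slice. -/
lemma fractional_subsingleton {u φ : Fin n → ℝ} (hφ : φ ∈ (simplexSlice u).extremePoints ℝ)
    {j k : Fin n} (hj : j ≠ 0) (hk : k ≠ 0) (hj0 : 0 < φ j) (hj1 : φ j < φ 0)
    (hk0 : 0 < φ k) (hk1 : φ k < φ 0) : j = k := by
  by_contra hjk
  have hA := hφ.1
  obtain ⟨⟨h0, h1, h2⟩, hu⟩ := hA
  have hpos := zero_pos_of_mem_slice hφ.1
  obtain ⟨a, b, hab, hne⟩ : ∃ a b : ℝ, u j * a + u k * b = 0 ∧ ¬ (a = 0 ∧ b = 0) := by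
    by_cases h : u j = 0
    · exact ⟨1, 0, by simp [h], by simp⟩
    · exact ⟨u k, -u j, by ring, by simp [h]⟩
  set d : Fin n → ℝ := Pi.single j a + Pi.single k b with hd
  have hdj : d j = a := by simp [hd, hjk]
  have hdk : d k = b := by simp [hd, Ne.symm hjk]
  have hdi : ∀ i, i ≠ j → i ≠ k → d i = 0 := fun i hi hi' => by simp [hd, hi, hi']
  have hd0 : d 0 = 0 := hdi 0 hj.symm hk.symm
  have hds : ∑ i, d i = a + b := by simp [hd, Finset.sum_add_distrib]
  have hdu : u ⬝ᵥ d = 0 := by simp [hd, dotProduct_add, hab]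
  -- Subtracting a multiple of `φ` keeps `u·d = 0` and restores the coordinate sum.
  set w : Fin n → ℝ := d - (a + b) • φ with hw
  have hwi : ∀ i, w i = d i - (a + b) * φ i := fun i => by simp [hw]
  have hws : ∑ i, w i = 0 := by
    simp only [hwi, Finset.sum_sub_distrib, ← Finset.mul_sum, hds, h1]
    ring
  have hwu : u ⬝ᵥ w = 0 := by simp [hw, dotProduct_sub, dotProduct_smul, hdu, hu]
  have hopen : ∀ f : ℝ → ℝ, Continuous f → 0 < f 0 → ∀ᶠ ε in 𝓝 (0 : ℝ), 0 < f ε :=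
    fun f hf h => hf.continuousAt.eventually (lt_mem_nhds h)
  have hev : ∀ᶠ ε in 𝓝 (0 : ℝ), φ + ε • w ∈ simplexSlice u := by
    filter_upwards [hopen (fun ε => 1 - ε * (a + b)) (by fun_prop) (by simp),
      hopen (fun ε => φ j + ε * w j) (by fun_prop) (by simpa using hj0),
      hopen (fun ε => φ k + ε * w k) (by fun_prop) (by simpa using hk0),
      hopen (fun ε => (φ 0 + ε * w 0) - (φ j + ε * w j)) (by fun_prop) (by simpa using hj1),
      hopen (fun ε => (φ 0 + ε * w 0) - (φ k + ε * w k)) (by fun_prop) (by simpa using hk1)]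
      with ε e1 e2 e3 e4 e5
    -- Away from `j` and `k` the perturbation is a rescaling of `φ`.
    have hscale : ∀ i, i ≠ j → i ≠ k → φ i + ε * w i = (1 - ε * (a + b)) * φ i :=
      fun i hi hi' => by rw [hwi, hdi i hi hi']; ring
    refine ⟨⟨fun i => ?_, ?_, fun i hi => ?_⟩, ?_⟩
    · simp only [Pi.add_apply, Pi.smul_apply, smul_eq_mul]
      by_cases hij : i = j
      · subst hij; exact e2.le
      by_cases hik : i = k
      · subst hik; exact e3.le
      rw [hscale i hij hik]
      exact mul_nonneg e1.le (h0 i)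
    · simp only [Pi.add_apply, Pi.smul_apply, smul_eq_mul, Finset.sum_add_distrib,
        ← Finset.mul_sum, hws, h1]
      ring
    · simp only [Pi.add_apply, Pi.smul_apply, smul_eq_mul]
      by_cases hij : i = j
      · subst hij; linarith
      by_cases hik : i = k
      · subst hik; linarith
      rw [hscale i hij hik, hscale 0 hj.symm hk.symm]
      exact mul_le_mul_of_nonneg_left (h2 i hi) e1.le
    · simp [dotProduct_add, dotProduct_smul, hu, hwu]
  obtain ⟨δ, hδ, hball⟩ := Metric.eventually_nhds_iff.1 hev
  have hp : φ + (δ / 2) • w ∈ simplexSlice u := hball (by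
    rw [Real.dist_eq, sub_zero, abs_of_pos (by linarith)]; linarith)
  have hm : φ + (-(δ / 2)) • w ∈ simplexSlice u := hball (by
    rw [Real.dist_eq, sub_zero, abs_neg, abs_of_pos (by linarith)]; linarith)
  have hseg : φ ∈ openSegment ℝ (φ + (δ / 2) • w) (φ + (-(δ / 2)) • w) := by
    refine ⟨1 / 2, 1 / 2, by norm_num, by norm_num, by norm_num, ?_⟩
    ext i
    simp only [Pi.add_apply, Pi.smul_apply, smul_eq_mul]
    ring
  have heq := hφ.2 hp hm hseg
  have hwz : ∀ i, w i = 0 := fun i => by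
    have := congrFun heq i
    simp only [Pi.add_apply, Pi.smul_apply, smul_eq_mul] at this
    have h' : δ / 2 * w i = 0 := by linarith
    rcases mul_eq_zero.1 h' with h | h
    · linarith
    · exact h
  -- The zeroth coordinate of `w = 0` gives `a + b = 0`, hence `d = w = 0`.
  have hσ : a + b = 0 := by
    have := hwz 0
    rw [hwi, hd0] at this
    have h' : (a + b) * φ 0 = 0 := by linarith
    exact (mul_eq_zero.1 h').resolve_right hpos.ne'
  have ha := hwz j
  have hb := hwz k
  rw [hwi, hσ, hdj] at ha
  rw [hwi, hσ, hdk] at hb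
  exact hne ⟨by linarith, by linarith⟩

/-- An extreme point has at most one fractional coordinate, so it is a vertex or lies inside an edge
of `C₀`; in the latter case `u·φ = 0` determines its position, unless the whole edge lies on the
hyperplane, which extremality excludes. -/
lemma mem_crossings_of_mem_extremePoints {u φ : Fin n → ℝ}
    (hφ : φ ∈ (simplexSlice u).extremePoints ℝ) : φ ∈ crossings u := by
  obtain ⟨⟨h0, h1, h2⟩, hu⟩ := hφ.1
  have hpos := zero_pos_of_mem_slice hφ.1
  set S : Finset (Fin n) := Finset.univ.filter fun i => i ≠ 0 ∧ φ i = φ 0 with hSdef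
  have hmemS : ∀ i, i ∈ S ↔ i ≠ 0 ∧ φ i = φ 0 := fun i => by simp [hSdef]
  have hS : (0 : Fin n) ∉ S := by simp [hmemS]
  have hc : ((S.card : ℝ) + 1) ≠ 0 := by positivity
  by_cases hfrac : ∃ k : Fin n, k ≠ 0 ∧ 0 < φ k ∧ φ k < φ 0
  · obtain ⟨k, hk, hk0, hk1⟩ := hfrac
    have hkS : k ∉ S := fun h => hk1.ne ((hmemS k).1 h).2
    have hS' : (0 : Fin n) ∉ insert k S := by simp [hS, hk.symm]
    have hcard : ((insert k S).card : ℝ) = S.card + 1 := by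
      rw [Finset.card_insert_of_notMem hkS]; push_cast; rfl
    have hc' : ((S.card : ℝ) + 1 + 1) ≠ 0 := by positivity
    -- The weights come from `φ = (φ 0 - φ k) • 1_{S ∪ {0}} + φ k • 1_{S ∪ {0, k}}`.
    obtain ⟨α, hα⟩ : ∃ α : ℝ, α = (φ 0 - φ k) * (S.card + 1) := ⟨_, rfl⟩
    obtain ⟨β, hβ⟩ : ∃ β : ℝ, β = φ k * (S.card + 1 + 1) := ⟨_, rfl⟩
    have hα0 : 0 < α := by rw [hα]; exact mul_pos (by linarith) (by positivity)
    have hβ0 : 0 < β := by rw [hβ]; positivity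
    have hrep : φ = α • simplexVertex S + β • simplexVertex (insert k S) := by
      ext i
      simp only [Pi.add_apply, Pi.smul_apply, smul_eq_mul, simplexVertex, hcard, hα, hβ,
        Finset.mem_insert]
      by_cases hi : i = 0
      · subst hi
        simp only [true_or, if_true]
        field_simp
        ring
      by_cases hik : i = k
      · subst hik
        simp only [hi, hkS, false_or, true_or, or_true, if_true, if_false]
        field_simp
        ring
      by_cases hiS : i ∈ S
      · simp only [hiS, or_true, if_true, ((hmemS i).1 hiS).2]
        field_simp
        ring
      · simp only [hi, hik, hiS, false_or, if_false]
        by_contra hne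
        have hi0 : 0 < φ i := lt_of_le_of_ne (h0 i) fun h => hne (by rw [← h]; ring)
        have hi1 : φ i < φ 0 := lt_of_le_of_ne (h2 i hi) fun h => hiS ((hmemS i).2 ⟨hi, h⟩)
        exact hik (fractional_subsingleton hφ hi hk hi0 hi1 hk0 hk1)
    have hαβ : α + β = 1 := by
      rw [hrep] at h1
      simpa only [Pi.add_apply, Pi.smul_apply, smul_eq_mul, Finset.sum_add_distrib,
        ← Finset.mul_sum, sum_simplexVertex hS, sum_simplexVertex hS', mul_one] using h1
    have hAB : α * (u ⬝ᵥ simplexVertex S) + β * (u ⬝ᵥ simplexVertex (insert k S)) = 0 := by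
      have h := hu
      rw [hrep] at h
      simpa only [dotProduct_add, dotProduct_smul, smul_eq_mul] using h
    by_cases hA : u ⬝ᵥ simplexVertex S = 0
    · have hB : u ⬝ᵥ simplexVertex (insert k S) = 0 := by
        rw [hA, mul_zero, zero_add] at hAB
        exact (mul_eq_zero.1 hAB).resolve_left hβ0.ne'
      refine Or.inl ⟨S, hS, hA, ?_⟩
      exact (hφ.2 (simplexVertex_mem_slice hS hA) (simplexVertex_mem_slice hS' hB)
        ⟨α, β, hα0, hβ0, hαβ, hrep.symm⟩).symm
    · have hneg : (u ⬝ᵥ simplexVertex S) * (u ⬝ᵥ simplexVertex (insert k S)) < 0 := by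
        have hsq : 0 < α * ((u ⬝ᵥ simplexVertex S) * (u ⬝ᵥ simplexVertex S)) :=
          mul_pos hα0 (mul_self_pos.2 hA)
        have : β * ((u ⬝ᵥ simplexVertex S) * (u ⬝ᵥ simplexVertex (insert k S))) < 0 := by
          linear_combination hsq + (u ⬝ᵥ simplexVertex S) * hAB
        by_contra hge
        exact absurd (mul_nonneg hβ0.le (not_lt.1 hge)) (not_le.2 this)
      refine Or.inr ⟨S, k, hS, hkS, hk, hneg, ?_⟩
      have hBA : (u ⬝ᵥ simplexVertex (insert k S)) - (u ⬝ᵥ simplexVertex S) ≠ 0 := by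
        intro h
        rw [sub_eq_zero.1 h] at hneg
        exact absurd hneg (not_lt.2 (mul_self_nonneg _))
      have ht : (u ⬝ᵥ simplexVertex (insert k S)) /
          ((u ⬝ᵥ simplexVertex (insert k S)) - (u ⬝ᵥ simplexVertex S)) = α := by
        rw [div_eq_iff hBA]
        linear_combination hAB - (u ⬝ᵥ simplexVertex (insert k S)) * hαβ
      rw [edgeCrossing, ht, show 1 - α = β by linarith]
      exact hrep
  · push Not at hfrac
    have hrep : φ = (φ 0 * (S.card + 1)) • simplexVertex S := by
      ext i
      simp only [Pi.smul_apply, smul_eq_mul, simplexVertex]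
      by_cases hi : i = 0
      · subst hi
        simp only [true_or, if_true]
        field_simp
      by_cases hiS : i ∈ S
      · simp only [hiS, or_true, if_true, ((hmemS i).1 hiS).2]
        field_simp
      · simp only [hi, hiS, or_self, if_false, mul_zero]
        by_contra hne
        have hi0 : 0 < φ i := lt_of_le_of_ne (h0 i) (Ne.symm hne)
        exact hiS ((hmemS i).2 ⟨hi, le_antisymm (h2 i hi) (hfrac i hi hi0)⟩)
    have hγ : φ 0 * (S.card + 1) = 1 := by
      have h := h1
      rw [hrep] at h
      simp only [Pi.smul_apply, smul_eq_mul, ← Finset.mul_sum, sum_simplexVertex hS,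
        mul_one] at h
      simpa [simplexVertex, hc] using h
    rw [hγ, one_smul] at hrep
    exact Or.inl ⟨S, hS, hrep ▸ hu, hrep⟩

end

/-! ### The slice as a convex hull -/

/-- The intersection of the dominant-component ordered simplex `C₀` with
the hyperplane `{φ : u·φ = 0}` equals the convex hull of the vertices `φ^S` lying on the
hyperplane together with the edge-crossing points `φ^{S,k⋆} = t* φ^S + (1 − t*) φ^{S∪{k}}`
(for `(u·φ^S)(u·φ^{S∪{k}}) < 0`, `t* = (u·φ^{S∪{k}})/((u·φ^{S∪{k}}) − (u·φ^S))`). -/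
theorem ordered_simplex_hyperplane_intersection_eq_convexHull
    (n : ℕ) (hn : 2 ≤ n) [NeZero n] (u : Fin n → ℝ) :
    let vert : Finset (Fin n) → (Fin n → ℝ) :=
      fun S i => if i = 0 ∨ i ∈ S then (1 : ℝ) / (S.card + 1) else 0
    {φ : Fin n → ℝ |
        ((∀ i, 0 ≤ φ i) ∧ (∑ i, φ i = 1) ∧ (∀ i : Fin n, i ≠ 0 → φ i ≤ φ 0)) ∧
        (∑ i, u i * φ i = 0)} =
    convexHull ℝ
      ({x : Fin n → ℝ | ∃ S : Finset (Fin n), (0 : Fin n) ∉ S ∧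
          (∑ i, u i * vert S i) = 0 ∧ x = vert S} ∪
       {x : Fin n → ℝ | ∃ (S : Finset (Fin n)) (k : Fin n), (0 : Fin n) ∉ S ∧
          k ∉ S ∧ k ≠ 0 ∧
          (∑ i, u i * vert S i) * (∑ i, u i * vert (insert k S) i) < 0 ∧
          x = ((∑ i, u i * vert (insert k S) i) /
                ((∑ i, u i * vert (insert k S) i) - (∑ i, u i * vert S i))) • vert S +
              (1 - (∑ i, u i * vert (insert k S) i) /
                ((∑ i, u i * vert (insert k S) i) - (∑ i, u i * vert S i))) •
                vert (insert k S)}) := by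
  intro vert
  change simplexSlice u = convexHull ℝ (crossings u)
  refine Set.Subset.antisymm ?_ (convexHull_min (crossings_subset_slice u) (convex_simplexSlice u))
  rw [← closure_convexHull_extremePoints (isCompact_simplexSlice u) (convex_simplexSlice u)]
  exact closure_minimal (convexHull_mono fun φ hφ => mem_crossings_of_mem_extremePoints hφ)
    ((finite_crossings u).isCompact_convexHull ℝ).isClosed
end
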